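/- Let G = (C, E) be a complete tournament with |C| = m candidates and let w ∈ Cop(G) be a Copeland winner of G with Copeland score σ_w. Then every smallest minimal support X for w ∈ Cop(G) satisfies: if w is a Condorcet winner then |X| = m − 1, and otherwise |X| = (m − 1)(m − 1 − σ_w). -/

import Mathlib

/-- `E` is the edge set of a complete (unweighted) tournament on `C`:
asymmetric and total on distinct candidates. -/
def IsCompleteT {C : Type*} (E : Finset (C × C)) : Prop :=
  (∀ x y : C, (x, y) ∈ E → (y, x) ∉ E) ∧
  (∀ x y : C, x ≠ y → (x, y) ∈ E ∨ (y, x) ∈ E)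

/-- The Copeland score of `c`: the number of candidates beaten by `c`. -/
def copScore {C : Type*} [Fintype C] [DecidableEq C] (E : Finset (C × C)) (c : C) : ℕ :=
  (Finset.univ.filter (fun c' => (c, c') ∈ E)).card

/-- `c` is a Copeland winner: its Copeland score is maximal. -/
def InCop {C : Type*} [Fintype C] [DecidableEq C] (E : Finset (C × C)) (c : C) : Prop :=
  ∀ c' : C, copScore E c' ≤ copScore E c

/-- `w` is a necessary winner of Copeland in the partial tournament `X`. -/
def NWCop {C : Type*} [Fintype C] [DecidableEq C] (X : Finset (C × C)) (w : C) : Prop :=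
  ∀ E' : Finset (C × C), X ⊆ E' → IsCompleteT E' → InCop E' w

/-- `X` is a minimal support for `w ∈ Cop(G)`. -/
def MSCop {C : Type*} [Fintype C] [DecidableEq C] (G X : Finset (C × C)) (w : C) : Prop :=
  X ⊆ G ∧ NWCop X w ∧ ∀ Y : Finset (C × C), Y ⊂ X → ¬ NWCop Y w

/-- `X` is a smallest minimal support for `w ∈ Cop(G)`. -/
def SMSCop {C : Type*} [Fintype C] [DecidableEq C] (G X : Finset (C × C)) (w : C) : Prop :=
  MSCop G X w ∧ ∀ Y : Finset (C × C), MSCop G Y w → X.card ≤ Y.card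

/-- `w` is a Condorcet winner of `G`: it beats every other candidate. -/
def IsCondorcet {C : Type*} (G : Finset (C × C)) (w : C) : Prop :=
  ∀ c : C, c ≠ w → (w, c) ∈ G

/-- The number of candidates that beat `c`. -/
def lossCount {C : Type*} [Fintype C] [DecidableEq C] (E : Finset (C × C)) (c : C) : ℕ :=
  (Finset.univ.filter (fun c' => (c', c) ∈ E)).card

section Copeland

variable {C : Type*} [Fintype C] [DecidableEq C]

lemma copScore_mono {X E : Finset (C × C)} (h : X ⊆ E) (c : C) :
    copScore X c ≤ copScore E c :=
  Finset.card_le_card fun x hx => by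
    simp only [Finset.mem_filter, Finset.mem_univ, true_and] at hx ⊢
    exact h hx

lemma lossCount_mono {X E : Finset (C × C)} (h : X ⊆ E) (c : C) :
    lossCount X c ≤ lossCount E c :=
  Finset.card_le_card fun x hx => by
    simp only [Finset.mem_filter, Finset.mem_univ, true_and] at hx ⊢
    exact h hx

lemma IsCompleteT.copScore_add_lossCount {E : Finset (C × C)} (hE : IsCompleteT E) (c : C) :
    copScore E c + lossCount E c + 1 = Fintype.card C := by
  obtain ⟨hasymm, htotal⟩ := hE
  unfold copScore lossCount
  rw [← Finset.card_union_of_disjoint, ← Finset.card_univ,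
    ← Finset.card_erase_add_one (Finset.mem_univ c)]
  · congr 2
    ext x
    simp only [Finset.mem_union, Finset.mem_filter, Finset.mem_univ, true_and, Finset.mem_erase]
    grind
  · rw [Finset.disjoint_left]
    intro x
    simp only [Finset.mem_filter, Finset.mem_univ, true_and]
    exact hasymm c x

lemma NWCop.of_forall_le {X : Finset (C × C)} {w : C}
    (h : ∀ c, c ≠ w → Fintype.card C ≤ copScore X w + lossCount X c + 1) : NWCop X w := by
  intro E hXE hE c
  rcases eq_or_ne c w with rfl | hc
  · exact le_rfl
  · have := h c hc
    have := hE.copScore_add_lossCount c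
    have := copScore_mono hXE w
    have := lossCount_mono hXE c
    omega

/-- In the completion of `X` that is worst for `w` against `c`, every undecided duel goes
to `c` or against `w`. -/
lemma NWCop.card_le {G X : Finset (C × C)} {w : C} (hG : IsCompleteT G) (hXG : X ⊆ G)
    (h : NWCop X w) {c : C} (hc : c ≠ w) :
    Fintype.card C ≤ copScore X w + lossCount X c + 1 := by
  obtain ⟨hasymm, htotal⟩ := hG
  let T : C → C → Prop := fun a b =>
    (a = c ∧ b ≠ c) ∨ (a ≠ c ∧ b ≠ c ∧ b = w ∧ a ≠ w) ∨
      (a ≠ c ∧ b ≠ c ∧ a ≠ w ∧ b ≠ w ∧ (a, b) ∈ G)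
  classical
  let E : Finset (C × C) :=
    Finset.univ.filter fun p => p ∈ X ∨ ((p.2, p.1) ∉ X ∧ T p.1 p.2)
  have mem_E (a b : C) : (a, b) ∈ E ↔ (a, b) ∈ X ∨ ((b, a) ∉ X ∧ T a b) := by simp [E]
  have hE : IsCompleteT E := by
    refine ⟨fun x y => ?_, fun x y hxy => ?_⟩
    · have := hasymm x y
      have := @hXG (x, y)
      have := @hXG (y, x)
      rw [mem_E, mem_E]
      grind
    · have := htotal x y hxy
      rw [mem_E, mem_E]
      grind
  have hXE : X ⊆ E := fun p hp => by simp [E, hp]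
  have hw : copScore E w = copScore X w := by
    unfold copScore
    congr 1
    ext x
    simp only [Finset.mem_filter, Finset.mem_univ, true_and, mem_E]
    grind
  have hl : lossCount E c = lossCount X c := by
    unfold lossCount
    congr 1
    ext x
    simp only [Finset.mem_filter, Finset.mem_univ, true_and, mem_E]
    grind
  have := h E hXE hE c
  have := hE.copScore_add_lossCount c
  omega

lemma card_eq_sum_lossCount (X : Finset (C × C)) : X.card = ∑ c, lossCount X c := by
  rw [Finset.card_eq_sum_card_fiberwise (f := Prod.snd) (t := Finset.univ) (by simp)]
  refine Finset.sum_congr rfl fun c _ => ?_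
  refine (Finset.card_bij (fun x _ => (x, c)) ?_ ?_ ?_).symm
  · simp
  · simp
  · rintro ⟨a, b⟩ h
    simp only [Finset.mem_filter] at h
    obtain ⟨h, rfl⟩ := h
    exact ⟨a, by simpa using h, rfl⟩

lemma copScore_le_card (X : Finset (C × C)) (w : C) : copScore X w ≤ X.card :=
  Finset.card_le_card_of_injOn (fun x => (w, x)) (fun x hx => by simpa using hx)
    (fun x _ y _ h => by simpa using h)

lemma mul_le_card_of_forall_le_lossCount {X : Finset (C × C)} {w : C} {k : ℕ}
    (h : ∀ c, c ≠ w → k ≤ lossCount X c) : (Fintype.card C - 1) * k ≤ X.card := by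
  rw [card_eq_sum_lossCount, ← Finset.card_univ, ← Finset.card_erase_of_mem (Finset.mem_univ w),
    ← smul_eq_mul]
  refine (Finset.card_nsmul_le_sum _ _ _ fun c hc => h c (Finset.ne_of_mem_erase hc)).trans ?_
  exact Finset.sum_le_sum_of_subset (Finset.erase_subset _ _)

lemma NWCop.le_card {G X : Finset (C × C)} {w : C} (hG : IsCompleteT G) (hXG : X ⊆ G)
    (h : NWCop X w) :
    (Fintype.card C - 1) * max 1 (Fintype.card C - 1 - copScore G w) ≤ X.card := by
  have hscore := copScore_mono hXG w
  rcases le_total (Fintype.card C - 1 - copScore G w) 1 with hk | hk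
  · rw [max_eq_left hk]
    by_cases hd : Fintype.card C - 1 ≤ copScore X w
    · have := copScore_le_card X w
      omega
    · refine mul_le_card_of_forall_le_lossCount (w := w) fun c hc => ?_
      have := h.card_le hG hXG hc
      omega
  · rw [max_eq_right hk]
    refine mul_le_card_of_forall_le_lossCount (w := w) fun c hc => ?_
    have := h.card_le hG hXG hc
    omega

lemma exists_nwCop_card_eq {G : Finset (C × C)} {w : C} (hG : IsCompleteT G) (hw : InCop G w) :
    ∃ X ⊆ G, NWCop X w ∧
      X.card = (Fintype.card C - 1) * max 1 (Fintype.card C - 1 - copScore G w) := by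
  set k := max 1 (Fintype.card C - 1 - copScore G w) with hk
  have losses_ge (c : C) (hc : c ≠ w) : k ≤ lossCount G c := by
    refine max_le ?_ ?_
    · by_contra hlt
      have h0 : lossCount G c = 0 := by omega
      rcases hG.2 c w hc with h | h
      · have hpos : 0 < lossCount G w := Finset.card_pos.2 ⟨c, by simpa using h⟩
        have := hG.copScore_add_lossCount c
        have := hG.copScore_add_lossCount w
        have := hw c
        omega
      · have hpos : 0 < lossCount G c := Finset.card_pos.2 ⟨w, by simpa using h⟩
        omega
    · have := hG.copScore_add_lossCount c
      have := hw c
      omega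
  have exists_losses (c : C) (hc : c ≠ w) : ∃ S : Finset C,
      (∀ x ∈ S, (x, c) ∈ G) ∧ ((w, c) ∈ G → w ∈ S) ∧ S.card = k := by
    obtain ⟨S, hS, hSG, hcard⟩ := Finset.exists_subsuperset_card_eq
      (s := Finset.univ.filter fun x => (x, c) ∈ G ∧ x = w)
      (t := Finset.univ.filter fun x => (x, c) ∈ G) (n := k)
      (fun x hx => by simp only [Finset.mem_filter] at hx ⊢; exact ⟨hx.1, hx.2.1⟩)
      (le_trans (Finset.card_le_one.2 (by grind)) (le_max_left _ _))
      (losses_ge c hc)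
    exact ⟨S, fun x hx => by simpa using hSG hx, fun h => hS (by simpa using h), hcard⟩
  choose! S hSG hSw hScard using exists_losses
  let X : Finset (C × C) := Finset.univ.filter fun p => p.2 ≠ w ∧ p.1 ∈ S p.2
  have mem_X (a b : C) : (a, b) ∈ X ↔ b ≠ w ∧ a ∈ S b := by simp [X]
  have hXG : X ⊆ G := by
    rintro ⟨a, b⟩ h
    rw [mem_X] at h
    exact hSG b h.1 a h.2
  have hloss (c : C) (hc : c ≠ w) : lossCount X c = k := by
    simp [lossCount, mem_X, hc, hScard]
  have hlossw : lossCount X w = 0 := by simp [lossCount, mem_X]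
  have hscore : copScore X w = copScore G w := by
    refine le_antisymm (copScore_mono hXG w) (Finset.card_le_card fun x hx => ?_)
    simp only [Finset.mem_filter, Finset.mem_univ, true_and, mem_X] at hx ⊢
    have hxw : x ≠ w := by
      rintro rfl
      exact hG.1 _ _ hx hx
    exact ⟨hxw, hSw x hxw hx⟩
  refine ⟨X, hXG, NWCop.of_forall_le fun c hc => ?_, ?_⟩
  · rw [hscore, hloss c hc]
    omega
  · rw [card_eq_sum_lossCount, ← Finset.add_sum_erase _ _ (Finset.mem_univ w), hlossw, zero_add,
      Finset.sum_congr rfl fun c hc => hloss c (Finset.ne_of_mem_erase hc), Finset.sum_const,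
      Finset.card_erase_of_mem (Finset.mem_univ w), Finset.card_univ, smul_eq_mul]

lemma exists_msCop_subset {G X : Finset (C × C)} {w : C} (hXG : X ⊆ G) (h : NWCop X w) :
    ∃ Y ⊆ X, MSCop G Y w := by
  induction X using Finset.strongInduction with
  | H X ih =>
    by_cases hmin : ∀ Y, Y ⊂ X → ¬ NWCop Y w
    · exact ⟨X, subset_rfl, hXG, h, hmin⟩
    · push Not at hmin
      obtain ⟨Y, hYX, hY⟩ := hmin
      obtain ⟨Z, hZY, hZ⟩ := ih Y hYX (hYX.subset.trans hXG) hY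
      exact ⟨Z, hZY.trans hYX.subset, hZ⟩

lemma SMSCop.card_eq {G X : Finset (C × C)} {w : C} (hG : IsCompleteT G) (hw : InCop G w)
    (hX : SMSCop G X w) :
    X.card = (Fintype.card C - 1) * max 1 (Fintype.card C - 1 - copScore G w) := by
  obtain ⟨⟨hXG, hNW, -⟩, hmin⟩ := hX
  obtain ⟨Y, hYG, hY, hcard⟩ := exists_nwCop_card_eq hG hw
  obtain ⟨Z, hZY, hZ⟩ := exists_msCop_subset hYG hY
  exact le_antisymm (hcard ▸ (hmin Z hZ).trans (Finset.card_le_card hZY)) (hNW.le_card hG hXG)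

lemma isCondorcet_iff_lossCount_eq_zero {G : Finset (C × C)} {w : C} (hG : IsCompleteT G) :
    IsCondorcet G w ↔ lossCount G w = 0 := by
  simp only [IsCondorcet, lossCount, Finset.card_eq_zero, Finset.filter_eq_empty_iff,
    Finset.mem_univ, true_implies]
  obtain ⟨hasymm, htotal⟩ := hG
  grind

end Copeland


/-- For a Copeland winner `w` with Copeland score `σ_w` of a complete tournament
on `m` candidates, every smallest minimal support `X` satisfies: if `w` is a
Condorcet winner then `|X| = m - 1`, and otherwise `|X| = (m-1)(m-1-σ_w)`. -/
theorem stmt13 {C : Type*} [Fintype C] [DecidableEq C] [Nonempty C]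
    (m : ℕ) (hm : Fintype.card C = m)
    (G : Finset (C × C)) (hG : IsCompleteT G) (w : C) (hw : InCop G w)
    (X : Finset (C × C)) (hX : SMSCop G X w) :
    (IsCondorcet G w → X.card = m - 1) ∧
    (¬ IsCondorcet G w → X.card = (m - 1) * (m - 1 - copScore G w)) := by
  have hcard := hX.card_eq hG hw
  have hsum := hG.copScore_add_lossCount w
  rw [isCondorcet_iff_lossCount_eq_zero hG]
  rw [hm] at hcard hsum
  refine ⟨fun h => ?_, fun h => ?_⟩
  · rw [hcard, max_eq_left (by omega), mul_one]
  · rw [hcard, max_eq_right (by omega)]
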